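/- arXiv:2109.01371 — 2 statements merged into one kernel-verified Lean document; each statement's English description precedes it below -/
import Mathlib

section
/- There is a family, indexed by the subsets of ℕ (hence of cardinality 2^ℵ0), of pairwise distinct clones on {0,1,2}, each consisting of operations that preserve C_3, such that no two distinct members of the family are homomorphically equivalent (i.e., for any two distinct members, clone homomorphisms do not exist in both directions). -/
/-- The three-element domain `{0,1,2}`. -/
abbrev D3 : Type := Fin 3

/-- `n`-ary operations on `{0,1,2}`. -/
abbrev Op (n : ℕ) : Type := (Fin n → D3) → D3

/-- An `n`-ary operation `f` preserves a `k`-ary relation `R`. -/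
def Preserves {n k : ℕ} (f : Op n) (R : Set (Fin k → D3)) : Prop :=
  ∀ t : Fin n → (Fin k → D3), (∀ i, t i ∈ R) → (fun j => f fun i => t i j) ∈ R

/-- `C₃ = {(0,1),(1,2),(2,0)}`. -/
def C3rel : Set (Fin 2 → D3) :=
  { t | (t 0 = 0 ∧ t 1 = 1) ∨ (t 0 = 1 ∧ t 1 = 2) ∨ (t 0 = 2 ∧ t 1 = 0) }

/-- A clone on `{0,1,2}`: a set of operations (of each arity) containing all projections
and closed under composition. -/
structure IsClone (C : ∀ n, Set (Op n)) : Prop where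
  proj_mem : ∀ (n : ℕ) (i : Fin n), (fun x => x i) ∈ C n
  comp_mem : ∀ (n m : ℕ) (f : Op n) (g : Fin n → Op m),
    f ∈ C n → (∀ i, g i ∈ C m) → (fun x => f fun i => g i x) ∈ C m

/-- `ξ` is a clone homomorphism from `C` to `D`. -/
def IsCloneHom (C D : ∀ n, Set (Op n)) (ξ : ∀ n, Op n → Op n) : Prop :=
  (∀ n, ∀ f ∈ C n, ξ n f ∈ D n) ∧
  (∀ (n : ℕ) (i : Fin n), ξ n (fun x => x i) = fun x => x i) ∧
  (∀ (n m : ℕ) (f : Op n) (g : Fin n → Op m), f ∈ C n → (∀ i, g i ∈ C m) →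
    ξ m (fun x => f fun i => g i x) = fun x => ξ n f fun i => ξ m (g i) x)

/-- Two clones are homomorphically equivalent if there are clone homomorphisms
in both directions. -/
def HomEquivalent (C D : ∀ n, Set (Op n)) : Prop :=
  (∃ ξ, IsCloneHom C D ξ) ∧ (∃ ξ, IsCloneHom D C ξ)

/-! A clone homomorphism between two clones of operations that preserve `C₃` and
`{0,1}² ∖ {(0,0)}` and contain the rock-paper-scissors operation `·` is the identity. It fixes `·`,
the only commutative such binary operation, hence every term in `·`; among these are ternary terms
`s₀, s₁, s₂` with `s_a(0,1,2) = a` and `f(s_{a₁}, …, s_{aₙ}) = s_{f(a)}` for every `f` in the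
clone, an identity from which `f` is recovered. So homomorphisms exist only along inclusions, and
it remains to embed the power set of `ℕ` into these clones ordered by inclusion. This is done with
relations `Q₂, Q₃, …` and operations `g₂, g₃, …` such that `gₘ` preserves `Qₙ` exactly when
`m ≠ n`: tuples of `Qₙ` that `gₘ` maps outside `Qₙ` yield a bijection between `m` and `n`. -/

/-! ### Clones and clone homomorphisms -/

/-- The polymorphism clone of a relation `R`, in all arities at once. The coordinates of `R` are
indexed by an arbitrary type; for `ι = Fin k` this is `Preserves`. -/
def Pol {ι : Type*} (R : Set (ι → D3)) : ∀ n, Set (Op n) := fun n =>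
  {f | ∀ t : Fin n → ι → D3, (∀ i, t i ∈ R) → (fun j => f fun i => t i j) ∈ R}

theorem isClone_pol {ι : Type*} (R : Set (ι → D3)) : IsClone (Pol R) where
  proj_mem _ i _ ht := ht i
  comp_mem _ _ _ g hf hg t ht := hf (fun i j => g i fun l => t l j) fun i => hg i t ht

theorem eq_vec2 {α : Type*} (v : Fin 2 → α) : v = ![v 0, v 1] :=
  (FinVec.etaExpand_eq v).symm

theorem mem_pol_two_iff {ι : Type*} {R : Set (ι → D3)} {f : Op 2} :
    f ∈ Pol R 2 ↔ ∀ x ∈ R, ∀ y ∈ R, (fun j => f ![x j, y j]) ∈ R := by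
  constructor
  · intro hf x hx y hy
    convert hf ![x, y] (Fin.forall_fin_two.2 ⟨hx, hy⟩) using 3 with j
    exact (eq_vec2 fun i => ![x, y] i j).symm
  · intro hf t ht
    convert hf (t 0) (ht 0) (t 1) (ht 1) using 3
    exact eq_vec2 _

theorem mem_pol_add_iff {ι : Type*} {R : Set (ι → D3)} {n m : ℕ} {f : Op (n + m)} :
    f ∈ Pol R (n + m) ↔ ∀ (X : Fin n → ι → D3) (T : Fin m → ι → D3),
      (∀ k, X k ∈ R) → (∀ k, T k ∈ R) →
        (fun j => f (Fin.append (fun k => X k j) fun k => T k j)) ∈ R := by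
  constructor
  · intro hf X T hX hT
    convert hf (Fin.append X T) (fun i => ?_) using 3 with j
    · ext i : 1
      refine Fin.addCases (fun k => ?_) (fun k => ?_) i <;> simp
    · refine Fin.addCases (fun k => ?_) (fun k => ?_) i
      · simpa using hX k
      · simpa using hT k
  · intro hf t ht
    convert hf (fun k => t (Fin.castAdd m k)) (fun k => t (Fin.natAdd n k))
      (fun k => ht _) (fun k => ht _) using 3 with j
    ext i : 1
    refine Fin.addCases (fun k => ?_) (fun k => ?_) i <;> simp

section Clone

variable {C D : ∀ n, Set (Op n)} {ξ : ∀ n, Op n → Op n}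

theorem IsClone.inf (hC : IsClone C) (hD : IsClone D) : IsClone (C ⊓ D) where
  proj_mem n i := ⟨hC.proj_mem n i, hD.proj_mem n i⟩
  comp_mem n m f g hf hg :=
    ⟨hC.comp_mem n m f g hf.1 fun i => (hg i).1, hD.comp_mem n m f g hf.2 fun i => (hg i).2⟩

theorem IsClone.iInf {κ : Sort*} {C : κ → ∀ n, Set (Op n)} (hC : ∀ k, IsClone (C k)) :
    IsClone (⨅ k, C k) where
  proj_mem n i := by
    simpa only [iInf_apply, Set.iInf_eq_iInter, Set.mem_iInter] using
      fun k => (hC k).proj_mem n i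
  comp_mem n m f g hf hg := by
    simp only [iInf_apply, Set.iInf_eq_iInter, Set.mem_iInter] at hf hg ⊢
    exact fun k => (hC k).comp_mem n m f g (hf k) fun i => hg i k

theorem IsClone.comp₂_mem (hC : IsClone C) {n : ℕ} {f : Op 2} {g h : Op n} (hf : f ∈ C 2)
    (hg : g ∈ C n) (hh : h ∈ C n) : (fun x => f ![g x, h x]) ∈ C n := by
  convert hC.comp_mem 2 n f ![g, h] hf (Fin.forall_fin_two.2 ⟨hg, hh⟩) using 3 with x
  exact (eq_vec2 fun i => ![g, h] i x).symm

theorem isCloneHom_id_of_le (h : C ≤ D) : IsCloneHom C D fun _ f => f :=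
  ⟨fun n _ hf => h n hf, fun _ _ => rfl, fun _ _ _ _ _ _ => rfl⟩

theorem IsCloneHom.isClone_fixed (hξ : IsCloneHom C D ξ) (hC : IsClone C) :
    IsClone fun n => {f ∈ C n | ξ n f = f} where
  proj_mem n i := ⟨hC.proj_mem n i, hξ.2.1 n i⟩
  comp_mem n m f g hf hg := by
    refine ⟨hC.comp_mem n m f g hf.1 fun i => (hg i).1, ?_⟩
    simp only [hξ.2.2 n m f g hf.1 fun i => (hg i).1, hf.2, (hg _).2]

theorem IsCloneHom.map_minor (hξ : IsCloneHom C D ξ) (hC : IsClone C) {n m : ℕ} {f : Op n}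
    (hf : f ∈ C n) (σ : Fin n → Fin m) :
    ξ m (fun x => f (x ∘ σ)) = fun x => ξ n f (x ∘ σ) := by
  have h := hξ.2.2 n m f (fun i x => x (σ i)) hf fun i => hC.proj_mem m (σ i)
  simp only [hξ.2.1] at h
  exact h

end Clone

/-! ### Rigidity -/

theorem mem_C3rel_iff (t : Fin 2 → D3) : t ∈ C3rel ↔ t 1 = t 0 + 1 := by
  change (t 0 = 0 ∧ t 1 = 1) ∨ (t 0 = 1 ∧ t 1 = 2) ∨ (t 0 = 2 ∧ t 1 = 0) ↔ _
  generalize t 0 = a, t 1 = b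
  decide +revert

theorem mem_pol_C3rel_iff {n : ℕ} {f : Op n} :
    f ∈ Pol C3rel n ↔ ∀ (x : Fin n → D3) (c : D3), f (fun i => x i + c) = f x + c := by
  constructor
  · intro hf x
    have map_add_one (y : Fin n → D3) : f (fun i => y i + 1) = f y + 1 :=
      (mem_C3rel_iff _).1 <| hf (fun i => ![y i, y i + 1]) fun i => (mem_C3rel_iff _).2 rfl
    refine Fin.forall_fin_succ.2 ⟨by simp, Fin.forall_fin_two.2 ⟨map_add_one x, ?_⟩⟩
    have h := map_add_one fun i => x i + 1
    simp only [map_add_one x, add_assoc] at h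
    exact h
  · intro hf t ht
    refine (mem_C3rel_iff _).2 ?_
    simpa only [(mem_C3rel_iff _).1 (ht _)] using hf (fun i => t i 0) 1

/-- The graph `{(0,1), (1,0), (1,1)}` of the Boolean clause `x ∨ y`. -/
def orRel : Set (Fin 2 → D3) := {t | t 0 ≠ 2 ∧ t 1 ≠ 2 ∧ (t 0 ≠ 0 ∨ t 1 ≠ 0)}

/-- The clone of all operations preserving `C₃` and `orRel`, inside which every clone containing
`rpsOp` is rigid. -/
def ambientClone : ∀ n, Set (Op n) := Pol C3rel ⊓ Pol orRel

theorem ambientClone_apply_add {n : ℕ} {f : Op n} (hf : f ∈ ambientClone n) (x : Fin n → D3)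
    (c : D3) : f (fun i => x i + c) = f x + c :=
  mem_pol_C3rel_iff.1 hf.1 x c

theorem ambientClone_apply_const {n : ℕ} {f : Op n} (hf : f ∈ ambientClone n) (c : D3) :
    f (fun _ => c) = c := by
  have apply_one : f (fun _ => 1) = 1 := by
    obtain ⟨h2, -, h0⟩ := hf.2 (fun _ _ => 1) fun _ => by simp [orRel]
    grind
  simpa [apply_one] using ambientClone_apply_add hf (fun _ => 1) (c - 1)

/-- The winner of a round of rock-paper-scissors, where `x + 1` beats `x`. -/
def rps (x y : D3) : D3 := if y = x + 1 then y else x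

/-- `rps` as a binary operation. -/
def rpsOp : Op 2 := fun v => rps (v 0) (v 1)

theorem rps_comm : ∀ a b, rps a b = rps b a := by decide

theorem rps_add : ∀ a b c, rps (a + c) (b + c) = rps a b + c := by decide

theorem rps_ne_two : ∀ {a b}, a ≠ 2 → b ≠ 2 → rps a b ≠ 2 := by decide

theorem rps_eq_zero_iff : ∀ {a b}, a ≠ 2 → b ≠ 2 → (rps a b = 0 ↔ a = 0 ∧ b = 0) := by decide

theorem rpsOp_mem_ambientClone : rpsOp ∈ ambientClone 2 := by
  refine ⟨mem_pol_C3rel_iff.2 fun x c => rps_add _ _ c, mem_pol_two_iff.2 ?_⟩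
  rintro x ⟨hx0, hx1, hx⟩ y ⟨hy0, hy1, -⟩
  refine ⟨rps_ne_two hx0 hy0, rps_ne_two hx1 hy1, hx.imp (mt ?_) (mt ?_)⟩
  · exact fun h => ((rps_eq_zero_iff hx0 hy0).1 h).1
  · exact fun h => ((rps_eq_zero_iff hx1 hy1).1 h).1

theorem eq_rpsOp_of_comm {f : Op 2} (hf : f ∈ ambientClone 2)
    (hcomm : ∀ a b, f ![a, b] = f ![b, a]) : f = rpsOp := by
  have apply_zero_one : f ![0, 1] = 1 := by
    obtain ⟨h2, -, h0⟩ := mem_pol_two_iff.1 hf.2 ![0, 1] (by simp [orRel]) ![1, 0]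
      (by simp [orRel])
    have h0 : f ![0, 1] ≠ 0 ∨ f ![1, 0] ≠ 0 := h0
    have h2 : f ![0, 1] ≠ 2 := h2
    grind
  have apply_add (a b c : D3) : f ![a + c, b + c] = f ![a, b] + c :=
    (congrArg f (eq_vec2 fun i => ![a, b] i + c)).symm.trans (ambientClone_apply_add hf _ c)
  have apply_succ (a : D3) : f ![a, a + 1] = a + 1 := by
    simpa [apply_zero_one, add_comm] using apply_add 0 1 a
  have apply_self (a : D3) : f ![a, a] = a :=
    (congrArg f (eq_vec2 fun _ => a)).symm.trans (ambientClone_apply_const hf a)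
  have apply_eq (a b : D3) : f ![a, b] = rps a b := by
    have cases_cyclic : ∀ a b : D3, b = a ∨ b = a + 1 ∨ a = b + 1 := by decide
    have rps_self : ∀ a : D3, rps a a = a := by decide
    have rps_succ : ∀ a : D3, rps a (a + 1) = a + 1 := by decide
    rcases cases_cyclic a b with rfl | rfl | rfl
    · rw [apply_self, rps_self]
    · rw [apply_succ, rps_succ]
    · rw [hcomm, apply_succ, rps_comm, rps_succ]
  ext v : 1
  rw [eq_vec2 v]
  exact apply_eq _ _

/-- The terms `s₀, s₁, s₂` in `rpsOp`. On a fixed argument they either agree or take the values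
`c, c + 1, c + 2`, and at `(0, 1, 2)` the value of `s_a` is `a`. -/
def selector : D3 → Op 3 :=
  ![fun v => rps (rps (v 1) (v 2)) (v 0),
    fun v => rps (rps (rps (v 1) (v 2)) (v 0)) (v 1),
    fun v => rps (rps (v 0) (v 1)) (rps (v 1) (v 2))]

theorem selector_const_or_add : ∀ v,
    (∀ a, selector a v = selector 0 v) ∨ ∀ a, selector a v = a + v 0 := by decide

theorem selector_apply_012 : ∀ a, selector a ![0, 1, 2] = a := by decide

theorem ambientClone_comp_selector {n : ℕ} {f : Op n} (hf : f ∈ ambientClone n)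
    (a : Fin n → D3) : (fun v => f fun i => selector (a i) v) = selector (f a) := by
  ext v : 1
  rcases selector_const_or_add v with h | h
  · simp only [h (a _), h (f a), ambientClone_apply_const hf]
  · simp only [h, ambientClone_apply_add hf]

theorem IsClone.selector_mem {C : ∀ n, Set (Op n)} (hC : IsClone C) (hrps : rpsOp ∈ C 2)
    (a : D3) : selector a ∈ C 3 := by
  have rps_mem {f g : Op 3} (hf : f ∈ C 3) (hg : g ∈ C 3) : (fun v => rps (f v) (g v)) ∈ C 3 :=
    hC.comp₂_mem hrps hf hg
  have h01 := rps_mem (hC.proj_mem 3 0) (hC.proj_mem 3 1)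
  have h12 := rps_mem (hC.proj_mem 3 1) (hC.proj_mem 3 2)
  have h120 := rps_mem h12 (hC.proj_mem 3 0)
  fin_cases a
  · exact h120
  · exact rps_mem h120 (hC.proj_mem 3 1)
  · exact rps_mem h01 h12

section Rigid

variable {C D : ∀ n, Set (Op n)} {ξ : ∀ n, Op n → Op n}

theorem IsCloneHom.map_rpsOp (hξ : IsCloneHom C D ξ) (hC : IsClone C) (hrps : rpsOp ∈ C 2)
    (hD : D ≤ ambientClone) : ξ 2 rpsOp = rpsOp := by
  refine eq_rpsOp_of_comm (hD 2 (hξ.1 2 rpsOp hrps)) fun a b => ?_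
  have rps_minor : (fun x => rpsOp (x ∘ ![1, 0])) = rpsOp := funext fun x => rps_comm _ _
  have h := congrFun (hξ.map_minor hC hrps ![1, 0]) ![a, b]
  rw [rps_minor] at h
  exact h.trans (congrArg (ξ 2 rpsOp) (eq_vec2 _))

theorem IsCloneHom.map_eq_self (hξ : IsCloneHom C D ξ) (hC : IsClone C) (hrps : rpsOp ∈ C 2)
    (hC' : C ≤ ambientClone) (hD : D ≤ ambientClone) {n : ℕ} {f : Op n} (hf : f ∈ C n) :
    ξ n f = f := by
  have map_selector (a : D3) : ξ 3 (selector a) = selector a :=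
    ((hξ.isClone_fixed hC).selector_mem ⟨hrps, hξ.map_rpsOp hC hrps hD⟩ a).2
  ext a : 1
  calc ξ n f a = ξ n f (fun i => ξ 3 (selector (a i)) ![0, 1, 2]) := by
        simp only [map_selector, selector_apply_012]
    _ = ξ 3 (fun v => f fun i => selector (a i) v) ![0, 1, 2] :=
        (congrFun (hξ.2.2 n 3 f _ hf fun i => hC.selector_mem hrps (a i)) _).symm
    _ = f a := by
        rw [ambientClone_comp_selector (hC' n hf), map_selector, selector_apply_012]

theorem exists_isCloneHom_iff_le (hC : IsClone C) (hrps : rpsOp ∈ C 2) (hC' : C ≤ ambientClone)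
    (hD : D ≤ ambientClone) : (∃ ξ, IsCloneHom C D ξ) ↔ C ≤ D := by
  refine ⟨fun ⟨ξ, hξ⟩ n f hf => ?_, fun h => ⟨_, isCloneHom_id_of_le h⟩⟩
  rw [← hξ.map_eq_self hC hrps hC' hD hf]
  exact hξ.1 n f hf

end Rigid

/-! ### Separating operations and relations -/

theorem eq_zero_or_one_of_ne_two : ∀ {a : D3}, a ≠ 2 → a = 0 ∨ a = 1 := by decide

section PinFun

variable {m : ℕ} {x t : Fin (m + 2) → D3}

/-- The value `a` if the set of values of `x` is `{a}` or `{a, a + 1}`. For `x` with three values,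
`x 0 - 1` is an arbitrary choice compatible with rotations. -/
def cyclicMin {m : ℕ} (x : Fin (m + 2) → D3) : D3 :=
  if ∃ i, x i = x 0 - 1 then x 0 - 1 else x 0

/-- The condition for `pinFun x t` to be `a` rather than `a + 1` when the values of `x` lie in
`{a, a + 1}`: off some coordinate `k`, `x` is `a`, and `(x k, t k)` is one of `(a, a)`,
`(a, a + 2)`, `(a + 1, a + 2)`. -/
def Pinned {m : ℕ} (x t : Fin (m + 2) → D3) (a : D3) : Prop :=
  ∃ k, (∀ i ≠ k, x i = a) ∧ (x k = a ∧ t k ≠ a + 1 ∨ x k = a + 1 ∧ t k = a + 2)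

open Classical in
/-- The function underlying `pinOp`. Its value at a Boolean `x` is at least the maximum of `x`,
except that it is `0` at a unit vector `x` whose nonzero coordinate is `2` in `t`. -/
noncomputable def pinFun {m : ℕ} (x t : Fin (m + 2) → D3) : D3 :=
  if Pinned x t (cyclicMin x) then cyclicMin x else cyclicMin x + 1

/-- The operation `g_{m+2}`, with its arguments split into two blocks of length
`m + 2`; it separates `sepRel (Fin (m + 2))` from the other relations `sepRel (Fin (n + 2))`. -/
noncomputable def pinOp (m : ℕ) : Op (m + 2 + (m + 2)) := fun y =>
  pinFun (fun i => y (Fin.castAdd _ i)) (fun i => y (Fin.natAdd _ i))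

theorem mem_pol_pinOp_iff {ι : Type*} {R : Set (ι → D3)} :
    pinOp m ∈ Pol R _ ↔ ∀ X T : Fin (m + 2) → ι → D3, (∀ k, X k ∈ R) → (∀ k, T k ∈ R) →
      (fun j => pinFun (fun k => X k j) fun k => T k j) ∈ R := by
  simp only [mem_pol_add_iff, pinOp, Fin.append_left, Fin.append_right]

theorem exists_cyclicMin_eq (x : Fin (m + 2) → D3) : ∃ i, x i = cyclicMin x := by
  unfold cyclicMin
  split_ifs with h
  · exact h
  · exact ⟨0, rfl⟩

theorem cyclicMin_eq_zero (hx : ∀ i, x i ≠ 2) {k : Fin (m + 2)} (hk : x k = 0) :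
    cyclicMin x = 0 := by
  rcases eq_zero_or_one_of_ne_two (hx 0) with h | h
  · have hne : ¬∃ i, x i = x 0 - 1 := fun ⟨i, hi⟩ => hx i (by rw [hi, h]; rfl)
    rw [cyclicMin, if_neg hne, h]
  · rw [cyclicMin, if_pos ⟨k, by rw [hk, h, sub_self]⟩, h, sub_self]

theorem cyclicMin_add (x : Fin (m + 2) → D3) (c : D3) :
    cyclicMin (fun i => x i + c) = cyclicMin x + c := by
  simp only [cyclicMin, add_sub_right_comm, add_left_inj]
  split_ifs <;> rfl

theorem pinned_add_iff {a c : D3} :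
    Pinned (fun i => x i + c) (fun i => t i + c) (a + c) ↔ Pinned x t a := by
  simp only [Pinned, add_right_comm a c, add_left_inj, ne_eq]

theorem pinFun_add (x t : Fin (m + 2) → D3) (c : D3) :
    pinFun (fun i => x i + c) (fun i => t i + c) = pinFun x t + c := by
  rw [pinFun, cyclicMin_add, pinned_add_iff, pinFun, add_right_comm]
  split_ifs <;> rfl

theorem pinFun_eq_zero_iff (hx : ∀ i, x i ≠ 2) : pinFun x t = 0 ↔ Pinned x t 0 := by
  constructor
  · intro h
    obtain ⟨i, hi⟩ := exists_cyclicMin_eq x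
    have hne : cyclicMin x + 1 ≠ 0 := by
      have := hx i
      grind
    unfold pinFun at h
    grind
  · intro h
    obtain ⟨k, hk, -⟩ := id h
    obtain ⟨i, hi⟩ := exists_ne k
    rw [pinFun, cyclicMin_eq_zero hx (hk i hi), if_pos h]

theorem pinFun_ne_two (hx : ∀ i, x i ≠ 2) {k : Fin (m + 2)} (hk : t k ≠ 2) :
    pinFun x t ≠ 2 := by
  by_cases h0 : cyclicMin x = 0
  · rw [pinFun, h0]
    split_ifs <;> decide
  · have eq_one (i) : x i = 1 :=
      (eq_zero_or_one_of_ne_two (hx i)).resolve_left (mt (cyclicMin_eq_zero hx) h0)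
    obtain ⟨i, hi⟩ := exists_cyclicMin_eq x
    have hpin : Pinned x t 1 := ⟨k, fun j _ => eq_one j, .inl ⟨eq_one k, hk⟩⟩
    rw [pinFun, ← hi, eq_one, if_pos hpin]
    decide

theorem pinFun_eq_zero_of_bool (hx : ∀ i, x i ≠ 2) (ht : ∀ i, t i ≠ 2) (h : pinFun x t = 0) :
    (∀ i, x i = 0) ∧ ∃ k, t k = 0 := by
  obtain ⟨k, hk, ⟨hxk, htk⟩ | ⟨-, htk⟩⟩ := (pinFun_eq_zero_iff hx).1 h
  · refine ⟨fun i => ?_, k, (eq_zero_or_one_of_ne_two (ht k)).resolve_right htk⟩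
    obtain rfl | hi := eq_or_ne i k
    exacts [hxk, hk i hi]
  · exact absurd htk (ht k)

theorem eq_two_of_pinFun_eq_zero (hx : ∀ i, x i ≠ 2) (h : pinFun x t = 0) {k : Fin (m + 2)}
    (hk : x k ≠ 0) : t k = 2 ∧ ∀ i ≠ k, x i = 0 := by
  obtain ⟨l, hl, hl'⟩ := (pinFun_eq_zero_iff hx).1 h
  obtain rfl : k = l := by_contra fun hkl => hk (hl k hkl)
  exact ⟨(hl'.resolve_left fun h => hk h.1).2, hl⟩

theorem pinOp_mem_ambientClone (m : ℕ) : pinOp m ∈ ambientClone (m + 2 + (m + 2)) := by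
  refine ⟨mem_pol_C3rel_iff.2 fun y c => pinFun_add _ _ c, mem_pol_pinOp_iff.2 ?_⟩
  intro X T hX hT
  refine ⟨pinFun_ne_two (fun k => (hX k).1) (hT 0).1,
    pinFun_ne_two (fun k => (hX k).2.1) (hT 0).2.1,
    (hX 0).2.2.imp (mt fun h => ?_) (mt fun h => ?_)⟩
  · exact (pinFun_eq_zero_of_bool (fun k => (hX k).1) (fun k => (hT k).1) h).1 0
  · exact (pinFun_eq_zero_of_bool (fun k => (hX k).2.1) (fun k => (hT k).2.1) h).1 0

end PinFun

open Sum (inl inr)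

/-- The relation `Q_ι` whose elements are pairs of a tuple `u = t ∘ inl` and a Boolean tuple
`w = t ∘ inr`: a zero `w j` makes `u` Boolean off `j`, and `w = 0` forces `u ≠ 0`. For nontrivial
`ι` it is preserved by those `pinOp m` for which `ι` does not have `m + 2` elements. -/
def sepRel (ι : Type*) : Set (ι ⊕ ι → D3) :=
  {t | (∀ j, t (inr j) ≠ 2) ∧ (∀ i j, i ≠ j → t (inr j) = 0 → t (inl i) ≠ 2) ∧
    ((∀ j, t (inr j) = 0) → ∃ i, t (inl i) ≠ 0)}

section SepRel

variable {ι : Type*}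

theorem inl_ne_two_of_mem_sepRel [Nontrivial ι] {t : ι ⊕ ι → D3} (ht : t ∈ sepRel ι)
    (h : ∀ j, t (inr j) = 0) (i : ι) : t (inl i) ≠ 2 := by
  obtain ⟨j, hj⟩ := exists_ne i
  exact ht.2.1 i j hj.symm (h j)

theorem rpsOp_mem_pol_sepRel [Nontrivial ι] : rpsOp ∈ Pol (sepRel ι) 2 := by
  refine mem_pol_two_iff.2 fun x hx y hy => ?_
  have inr_eq_zero {j} (h : rps (x (inr j)) (y (inr j)) = 0) :=
    (rps_eq_zero_iff (hx.1 j) (hy.1 j)).1 h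
  refine ⟨fun j => rps_ne_two (hx.1 j) (hy.1 j), fun i j hij h => ?_, fun h => ?_⟩
  · exact rps_ne_two (hx.2.1 i j hij (inr_eq_zero h).1) (hy.2.1 i j hij (inr_eq_zero h).2)
  · have hxw (j) := (inr_eq_zero (h j)).1
    have hyw (j) := (inr_eq_zero (h j)).2
    obtain ⟨i, hi⟩ := hx.2.2 hxw
    exact ⟨i, fun h0 => hi ((rps_eq_zero_iff (inl_ne_two_of_mem_sepRel hx hxw i)
      (inl_ne_two_of_mem_sepRel hy hyw i)).1 h0).1⟩

variable {m : ℕ}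

theorem inr_eq_zero_of_pinFun_eq_zero {X T : Fin (m + 2) → ι ⊕ ι → D3}
    (hX : ∀ k, X k ∈ sepRel ι) (hT : ∀ k, T k ∈ sepRel ι) {j : ι}
    (h : pinFun (fun k => X k (inr j)) (fun k => T k (inr j)) = 0) :
    (∀ k, X k (inr j) = 0) ∧ ∃ k, T k (inr j) = 0 :=
  pinFun_eq_zero_of_bool (fun k => (hX k).1 j) (fun k => (hT k).1 j) h

theorem card_eq_of_pinFun_eq_zero [Nontrivial ι] {X T : Fin (m + 2) → ι ⊕ ι → D3}
    (hX : ∀ k, X k ∈ sepRel ι) (hT : ∀ k, T k ∈ sepRel ι)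
    (h : ∀ s, pinFun (fun k => X k s) (fun k => T k s) = 0) : Nat.card ι = m + 2 := by
  have inr_eq_zero (j) := inr_eq_zero_of_pinFun_eq_zero hX hT (h (inr j))
  have hXw (k j) : X k (inr j) = 0 := (inr_eq_zero j).1 k
  have hXu (k i) : X k (inl i) ≠ 2 := inl_ne_two_of_mem_sepRel (hX k) (hXw k) i
  choose φ hφ using fun k => (hX k).2.2 (hXw k)
  have hpin (k) := eq_two_of_pinFun_eq_zero (fun l => hXu l (φ k)) (h (inl (φ k))) (hφ k)
  have hinj : Function.Injective φ := fun k l hkl =>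
    by_contra fun hne => hφ k (hkl ▸ (hpin l).2 k hne)
  have hsurj : Function.Surjective φ := fun j => by
    obtain ⟨k, hk⟩ := (inr_eq_zero j).2
    exact ⟨k, by_contra fun hne => (hT k).2.1 (φ k) j hne hk (hpin k).1⟩
  rw [← Nat.card_eq_of_bijective φ ⟨hinj, hsurj⟩, Nat.card_fin]

theorem pinOp_mem_pol_sepRel [Nontrivial ι] (hm : Nat.card ι ≠ m + 2) :
    pinOp m ∈ Pol (sepRel ι) (m + 2 + (m + 2)) := by
  refine mem_pol_pinOp_iff.2 fun X T hX hT => ?_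
  refine ⟨fun j => pinFun_ne_two (fun k => (hX k).1 j) ((hT 0).1 j), fun i j hij h => ?_,
    fun hw => ?_⟩
  · obtain ⟨hXw, k, hk⟩ := inr_eq_zero_of_pinFun_eq_zero hX hT h
    exact pinFun_ne_two (fun l => (hX l).2.1 i j hij (hXw l)) ((hT k).2.1 i j hij hk)
  · by_contra! hu
    exact hm (card_eq_of_pinFun_eq_zero hX hT (Sum.rec hu hw))

theorem elim_single_one_mem_sepRel [DecidableEq ι] (k : ι) :
    Sum.elim (Pi.single k 1) 0 ∈ sepRel ι := by
  refine ⟨fun _ => by simp, fun i j _ _ => ?_, fun _ => ⟨k, by simp⟩⟩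
  simp only [Sum.elim_inl, Pi.single_apply]
  split_ifs <;> decide

theorem elim_single_two_mem_sepRel [DecidableEq ι] [Nontrivial ι] (k : ι) :
    Sum.elim (Pi.single k 2) (Function.update 1 k 0) ∈ sepRel ι := by
  have inr_ne_zero {j} (hj : j ≠ k) : (Function.update 1 k 0 : ι → D3) j ≠ 0 := by simp [hj]
  refine ⟨fun j => ?_, fun i j hij h => ?_, fun h => ?_⟩
  · simp only [Sum.elim_inr, Function.update_apply, Pi.one_apply]
    split_ifs <;> decide
  · obtain rfl : j = k := by_contra fun hj => inr_ne_zero hj h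
    simp [hij]
  · obtain ⟨j, hj⟩ := exists_ne k
    exact absurd (h j) (inr_ne_zero hj)

theorem pinOp_notMem_pol_sepRel (m : ℕ) :
    pinOp m ∉ Pol (sepRel (Fin (m + 2))) (m + 2 + (m + 2)) := by
  intro h
  obtain ⟨-, -, hu⟩ := mem_pol_pinOp_iff.1 h _ _ elim_single_one_mem_sepRel
    elim_single_two_mem_sepRel
  obtain ⟨i, hi⟩ := hu fun j =>
    (pinFun_eq_zero_iff fun _ => by simp).2 ⟨j, fun _ _ => rfl, .inl ⟨rfl, by simp⟩⟩
  refine hi ((pinFun_eq_zero_iff fun k => ?_).2 ⟨i, fun k hki => ?_, .inr ?_⟩)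
  · exact inl_ne_two_of_mem_sepRel (elim_single_one_mem_sepRel k) (fun _ => rfl) i
  · simp [hki.symm]
  · simp

end SepRel

/-! ### The family of clones -/

/-- The family of clones `Pol (C₃, orRel, (Q_{m+2})_{m ∉ S})`, increasing in `S`. -/
def cloneFamily (S : Set ℕ) : ∀ n, Set (Op n) :=
  ambientClone ⊓ ⨅ m ∈ Sᶜ, Pol (sepRel (Fin (m + 2)))

section CloneFamily

variable {S T : Set ℕ}

theorem mem_cloneFamily_iff {n : ℕ} {f : Op n} : f ∈ cloneFamily S n ↔
    f ∈ ambientClone n ∧ ∀ m ∉ S, f ∈ Pol (sepRel (Fin (m + 2))) n := by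
  simp [cloneFamily]

theorem isClone_cloneFamily (S : Set ℕ) : IsClone (cloneFamily S) :=
  ((isClone_pol _).inf (isClone_pol _)).inf <| .iInf fun _ => .iInf fun _ => isClone_pol _

theorem cloneFamily_le_ambientClone (S : Set ℕ) : cloneFamily S ≤ ambientClone :=
  inf_le_left

theorem rpsOp_mem_cloneFamily (S : Set ℕ) : rpsOp ∈ cloneFamily S 2 :=
  mem_cloneFamily_iff.2 ⟨rpsOp_mem_ambientClone, fun _ _ => rpsOp_mem_pol_sepRel⟩

theorem pinOp_mem_cloneFamily_iff {m : ℕ} : pinOp m ∈ cloneFamily S (m + 2 + (m + 2)) ↔ m ∈ S := by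
  refine ⟨fun h => by_contra fun hm => ?_, fun hm => ?_⟩
  · exact pinOp_notMem_pol_sepRel m ((mem_cloneFamily_iff.1 h).2 m hm)
  · refine mem_cloneFamily_iff.2 ⟨pinOp_mem_ambientClone m, fun n hn => pinOp_mem_pol_sepRel ?_⟩
    rw [Nat.card_fin]
    grind

theorem cloneFamily_le_iff : cloneFamily S ≤ cloneFamily T ↔ S ⊆ T := by
  refine ⟨fun h m hm => ?_, fun h => ?_⟩
  · exact pinOp_mem_cloneFamily_iff.1 (h _ (pinOp_mem_cloneFamily_iff.2 hm))
  · exact inf_le_inf_left _ (biInf_mono (Set.compl_subset_compl.2 h))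

theorem exists_isCloneHom_cloneFamily_iff :
    (∃ ξ, IsCloneHom (cloneFamily S) (cloneFamily T) ξ) ↔ S ⊆ T :=
  (exists_isCloneHom_iff_le (isClone_cloneFamily S) (rpsOp_mem_cloneFamily S)
    (cloneFamily_le_ambientClone S) (cloneFamily_le_ambientClone T)).trans cloneFamily_le_iff

theorem cloneFamily_injective : Function.Injective cloneFamily := fun _ _ h =>
  (cloneFamily_le_iff.1 h.le).antisymm (cloneFamily_le_iff.1 h.ge)

theorem homEquivalent_cloneFamily_iff : HomEquivalent (cloneFamily S) (cloneFamily T) ↔ S = T := by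
  rw [HomEquivalent, exists_isCloneHom_cloneFamily_iff, exists_isCloneHom_cloneFamily_iff,
    subset_antisymm_iff]

end CloneFamily

/-- There is a family, indexed by the subsets of `ℕ`, of pairwise distinct clones on `{0,1,2}`
consisting of operations preserving `C₃`, no two distinct members of which are
homomorphically equivalent. -/
theorem stmt1 :
    ∃ F : Set ℕ → (∀ n, Set (Op n)),
      (∀ S, IsClone (F S)) ∧
      (∀ S (n : ℕ), ∀ f ∈ F S n, Preserves f C3rel) ∧
      (∀ S T, S ≠ T → F S ≠ F T ∧ ¬ HomEquivalent (F S) (F T)) :=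
  ⟨cloneFamily, isClone_cloneFamily,
    fun S n _ hf => (cloneFamily_le_ambientClone S n hf).1,
    fun _ _ hST => ⟨cloneFamily_injective.ne hST, mt homEquivalent_cloneFamily_iff.1 hST⟩⟩
end

section
/- For all m,k ≥ 1 and all S_1,…,S_m ⊆ {1,…,k} with S_1 ∪ … ∪ S_m = {1,…,k}, the map g with g(0)=(0,1,0,0), g(1)=(1,0,1,0), g(2)=(2,0,0,1) maps C_3 into C_3', W into W', and R_{S_1,…,S_m} into R'_{S_1,…,S_m} (componentwise on tuples), and the map h with h(x_0,x_1,x_2,x_3)=0 if (x_1,x_2,x_3)∈{(1,0,0),(1,0,1)}, =1 if (x_1,x_2,x_3)∈{(0,1,0),(1,1,0)}, =2 if (x_1,x_2,x_3)∈{(0,0,1),(0,1,1)}, =x_0 otherwise, maps C_3' into C_3, W' into W, and R'_{S_1,…,S_m} into R_{S_1,…,S_m}. Hence the structure ({0,1,2}; C_3, W, (R_{S_1,…,S_m})) is homomorphically equivalent to the structure ({0,1,2}^4; C_3', W', (R'_{S_1,…,S_m})). -/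
/-- `C₃ = {(0,1),(1,2),(2,0)}`. -/
def C3P (a b : D3) : Prop := (a = 0 ∧ b = 1) ∨ (a = 1 ∧ b = 2) ∨ (a = 2 ∧ b = 0)

/-- `≤₂ = {(0,0),(0,1),(1,1)}`. -/
def le2P (a b : D3) : Prop := (a = 0 ∧ b = 0) ∨ (a = 0 ∧ b = 1) ∨ (a = 1 ∧ b = 1)

/-- `B₃ = {0,1}³ \ {(0,0,0)}`. -/
def B3P (a b c : D3) : Prop :=
  (a = 0 ∨ a = 1) ∧ (b = 0 ∨ b = 1) ∧ (c = 0 ∨ c = 1) ∧ ¬(a = 0 ∧ b = 0 ∧ c = 0)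

/-- `W = {(x,y) : x ∈ {0,1} ∧ (x = 0 → y ∈ {0,1})}`. -/
def WP (a b : D3) : Prop := (a = 0 ∨ a = 1) ∧ (a = 0 → (b = 0 ∨ b = 1))

/-- The relation `R_{S₁,…,S_m} ⊆ {0,1,2}^{m+k}`, with the tuple split as
`x : Fin m → D3` and `y : Fin k → D3`. -/
def RSP {m k : ℕ} (S : Fin m → Set (Fin k)) (x : Fin m → D3) (y : Fin k → D3) : Prop :=
  (∀ i, x i = 0 ∨ x i = 1) ∧
  (∀ i, x i = 0 → ∀ j ∈ S i, (y j = 0 ∨ y j = 1)) ∧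
  ¬((∀ i, x i = 0) ∧ (∀ j, y j = 0))

/-- The relation `C₃'` on `{0,1,2}⁴`. -/
def C3P' (x y : Fin 4 → D3) : Prop :=
  C3P (x 0) (y 0) ∧ x 1 = y 2 ∧ x 2 = y 3 ∧ x 3 = y 1

/-- The relation `W'` on `{0,1,2}⁴`. -/
def WP' (x y : Fin 4 → D3) : Prop :=
  B3P (x 1) (x 2) (x 3) ∧ B3P (y 1) (y 2) (y 3) ∧ x 3 = 0 ∧ x 0 = x 2 ∧ le2P (y 3) (x 0)

/-- The relation `R'_{S₁,…,S_m}` on `{0,1,2}⁴`. -/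
def RSP' {m k : ℕ} (S : Fin m → Set (Fin k))
    (x : Fin m → Fin 4 → D3) (y : Fin k → Fin 4 → D3) : Prop :=
  ((∀ i, x i 2 = 0 ∨ x i 2 = 1) ∧ (∀ j, y j 2 = 0 ∨ y j 2 = 1) ∧
    ¬((∀ i, x i 2 = 0) ∧ (∀ j, y j 2 = 0))) ∧
  (∀ i, B3P (x i 1) (x i 2) (x i 3) ∧ x i 3 = 0 ∧ x i 0 = x i 2 ∧
    ∀ j ∈ S i, le2P (y j 3) (x i 0) ∧ B3P (y j 1) (y j 2) (y j 3))

/-- The map `g` with `g(0) = (0,1,0,0)`, `g(1) = (1,0,1,0)`, `g(2) = (2,0,0,1)`. -/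
def gMap : D3 → Fin 4 → D3 := ![![0,1,0,0], ![1,0,1,0], ![2,0,0,1]]

/-- The map `h`. -/
def hMap (x : Fin 4 → D3) : D3 :=
  if (x 1, x 2, x 3) = ((1 : D3), (0 : D3), (0 : D3)) ∨
     (x 1, x 2, x 3) = ((1 : D3), (0 : D3), (1 : D3)) then 0
  else if (x 1, x 2, x 3) = ((0 : D3), (1 : D3), (0 : D3)) ∨
          (x 1, x 2, x 3) = ((1 : D3), (1 : D3), (0 : D3)) then 1
  else if (x 1, x 2, x 3) = ((0 : D3), (0 : D3), (1 : D3)) ∨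
          (x 1, x 2, x 3) = ((0 : D3), (1 : D3), (1 : D3)) then 2
  else x 0

/-- `g` is a homomorphism from `({0,1,2}; C₃, W, (R_{S₁,…,S_m}))` to
`({0,1,2}⁴; C₃', W', (R'_{S₁,…,S_m}))`. -/
def IsHomForward (g : D3 → Fin 4 → D3) : Prop :=
  (∀ a b : D3, C3P a b → C3P' (g a) (g b)) ∧
  (∀ a b : D3, WP a b → WP' (g a) (g b)) ∧
  (∀ (m k : ℕ), 1 ≤ m → 1 ≤ k → ∀ S : Fin m → Set (Fin k), (∀ j, ∃ i, j ∈ S i) →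
    ∀ (x : Fin m → D3) (y : Fin k → D3), RSP S x y →
      RSP' S (fun i => g (x i)) (fun j => g (y j)))

/-- `h` is a homomorphism from `({0,1,2}⁴; C₃', W', (R'_{S₁,…,S_m}))` to
`({0,1,2}; C₃, W, (R_{S₁,…,S_m}))`. -/
def IsHomBackward (h : (Fin 4 → D3) → D3) : Prop :=
  (∀ x y : Fin 4 → D3, C3P' x y → C3P (h x) (h y)) ∧
  (∀ x y : Fin 4 → D3, WP' x y → WP (h x) (h y)) ∧
  (∀ (m k : ℕ), 1 ≤ m → 1 ≤ k → ∀ S : Fin m → Set (Fin k), (∀ j, ∃ i, j ∈ S i) →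
    ∀ (x : Fin m → Fin 4 → D3) (y : Fin k → Fin 4 → D3), RSP' S x y →
      RSP S (fun i => h (x i)) (fun j => h (y j)))

/-!
Both `C₃` and `C₃'` are graphs of maps: `a ↦ a + 1` on `{0,1,2}`, and on `{0,1,2}⁴` the map
adding `1` to coordinate `0` while rotating the other three. The maps `g` and `h` intertwine them.

Both `R_S` and `R'_S` say that the pairs `(xᵢ, yⱼ)` with `j ∈ Sᵢ` lie in `W` (resp. `W'`), that
each `xᵢ` lies in its domain, and that certain entries are not all zero. The first two conditions
are preserved by every map that preserves `W`. On the domain of `W` coordinate `2` of `g a` is `a`,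
and on the domain of `W'` the value `h x` is coordinate `2` of `x`; when the first component is
zero in this sense, the same holds for the second, so the entries in question vanish
simultaneously.
-/

/-- The self-map of `{0,1,2}⁴` whose graph is `C₃'`; it corresponds to `a ↦ a + 1` on `{0,1,2}`. -/
def rotateTail (x : Fin 4 → D3) : Fin 4 → D3 := ![x 0 + 1, x 3, x 1, x 2]

theorem C3P_iff_eq_add_one (a b : D3) : C3P a b ↔ b = a + 1 := by
  revert a b
  unfold C3P
  decide

theorem C3P'_iff_eq_rotateTail (x y : Fin 4 → D3) : C3P' x y ↔ y = rotateTail x := by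
  rw [C3P', C3P_iff_eq_add_one]
  constructor
  · rintro ⟨h0, h12, h23, h31⟩
    funext i
    fin_cases i
    exacts [h0, h31.symm, h12.symm, h23.symm]
  · rintro rfl
    exact ⟨rfl, rfl, rfl, rfl⟩

theorem gMap_add_one (a : D3) : gMap (a + 1) = rotateTail (gMap a) := by
  revert a
  decide

theorem hMap_rotateTail (x : Fin 4 → D3) : hMap (rotateTail x) = hMap x + 1 := by
  have hMap_vec : ∀ a b c d : D3, hMap ![a + 1, d, b, c] = hMap ![a, b, c, d] + 1 := by decide
  exact hMap_vec (x 0) (x 1) (x 2) (x 3)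

theorem C3P'_gMap {a b : D3} (h : C3P a b) : C3P' (gMap a) (gMap b) := by
  rw [C3P_iff_eq_add_one] at h
  rw [C3P'_iff_eq_rotateTail, h, gMap_add_one]

theorem C3P_hMap {x y : Fin 4 → D3} (h : C3P' x y) : C3P (hMap x) (hMap y) := by
  rw [C3P'_iff_eq_rotateTail] at h
  rw [C3P_iff_eq_add_one, h, hMap_rotateTail]

section Linked

/-- The condition that `R_S` (for `T = W`) and `R'_S` (for `T = W'`) impose through `T`: every `x i`
is in the domain of `T`, and `T` holds between `x i` and `y j` whenever `j ∈ S i`. The domain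
condition is separate because `S i` may be empty. -/
def Linked {ι κ α : Type*} (T : α → α → Prop) (S : ι → Set κ) (x : ι → α) (y : κ → α) : Prop :=
  (∀ i, ∃ b, T (x i) b) ∧ ∀ i, ∀ j ∈ S i, T (x i) (y j)

variable {ι κ α β M : Type*} {T : α → α → Prop} {S : ι → Set κ} {x : ι → α} {y : κ → α}

theorem Linked.map {T' : β → β → Prop} {f : α → β} (hf : ∀ a b, T a b → T' (f a) (f b))
    (h : Linked T S x y) : Linked T' S (fun i => f (x i)) (fun j => f (y j)) :=
  ⟨fun i => (h.1 i).imp' f fun b => hf (x i) b, fun i j hj => hf (x i) (y j) (h.2 i j hj)⟩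

theorem Linked.forall_eq_zero_congr [Zero M] {p q : α → M} (h : Linked T S x y)
    (hS : ∀ j, ∃ i, j ∈ S i) (hfst : ∀ a b, T a b → p a = q a)
    (hsnd : ∀ a b, T a b → q a = 0 → p b = q b) :
    ((∀ i, p (x i) = 0) ∧ ∀ j, p (y j) = 0) ↔ (∀ i, q (x i) = 0) ∧ ∀ j, q (y j) = 0 := by
  have hx (i : ι) : p (x i) = q (x i) := (h.1 i).elim (hfst (x i))
  simp only [hx]
  refine and_congr_right fun hzero => forall_congr' fun j => ?_
  obtain ⟨i, hij⟩ := hS j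
  rw [hsnd (x i) (y j) (h.2 i j hij) (hzero i)]

end Linked

theorem exists_WP_iff (a : D3) : (∃ b, WP a b) ↔ a = 0 ∨ a = 1 :=
  ⟨fun ⟨_, h⟩ => h.1, fun h => ⟨0, h, fun _ => Or.inl rfl⟩⟩

theorem B3P_gMap (a : D3) : B3P (gMap a 1) (gMap a 2) (gMap a 3) := by
  revert a
  unfold B3P
  decide

theorem exists_WP'_iff (x : Fin 4 → D3) :
    (∃ y, WP' x y) ↔ B3P (x 1) (x 2) (x 3) ∧ x 3 = 0 ∧ x 0 = x 2 := by
  constructor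
  · rintro ⟨_, hB, -, h3, h02, -⟩
    exact ⟨hB, h3, h02⟩
  · rintro ⟨hB, h3, h02⟩
    have hle : le2P 0 (x 0) := by
      rw [h02]
      exact hB.2.1.imp (⟨rfl, ·⟩) fun h1 => Or.inl ⟨rfl, h1⟩
    exact ⟨gMap 0, hB, B3P_gMap 0, h3, h02, hle⟩

theorem gMap_apply_two_eq_self {a : D3} (ha : a = 0 ∨ a = 1) : gMap a 2 = a := by
  rcases ha with rfl | rfl <;> rfl

theorem WP'_gMap {a b : D3} (h : WP a b) : WP' (gMap a) (gMap b) := by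
  revert a b
  unfold WP WP' B3P le2P
  decide

theorem hMap_eq_apply_two {x : Fin 4 → D3} (hB : B3P (x 1) (x 2) (x 3)) (h3 : x 3 = 0) :
    hMap x = x 2 := by
  have hMap_vec : ∀ a b c d : D3, B3P b c d → d = 0 → hMap ![a, b, c, d] = c := by
    unfold B3P
    decide
  exact hMap_vec (x 0) (x 1) (x 2) (x 3) hB h3

theorem le2P_zero_right_iff (a : D3) : le2P a 0 ↔ a = 0 := by
  simp [le2P]

theorem WP'.hMap_fst_eq {x y : Fin 4 → D3} (h : WP' x y) : hMap x = x 2 :=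
  hMap_eq_apply_two h.1 h.2.2.1

theorem WP'.hMap_snd_eq {x y : Fin 4 → D3} (h : WP' x y) (hx : x 2 = 0) : hMap y = y 2 := by
  obtain ⟨-, hB, -, h02, hle⟩ := h
  rw [h02, hx, le2P_zero_right_iff] at hle
  exact hMap_eq_apply_two hB hle

theorem WP_hMap {x y : Fin 4 → D3} (h : WP' x y) : WP (hMap x) (hMap y) := by
  rw [h.hMap_fst_eq]
  refine ⟨h.1.2.1, fun hx => ?_⟩
  rw [h.hMap_snd_eq hx]
  exact h.2.1.2.1

section Covering

variable {m k : ℕ} {S : Fin m → Set (Fin k)}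

theorem RSP_iff_linked (x : Fin m → D3) (y : Fin k → D3) :
    RSP S x y ↔ Linked WP S x y ∧ ¬((∀ i, x i = 0) ∧ ∀ j, y j = 0) := by
  constructor
  · rintro ⟨hx, hxy, hne⟩
    exact ⟨⟨fun i => (exists_WP_iff (x i)).2 (hx i),
      fun i j hj => ⟨hx i, fun h0 => hxy i h0 j hj⟩⟩, hne⟩
  · rintro ⟨⟨hdom, hW⟩, hne⟩
    exact ⟨fun i => (exists_WP_iff (x i)).1 (hdom i), fun i h0 j hj => (hW i j hj).2 h0, hne⟩

theorem RSP'_iff_linked (hS : ∀ j, ∃ i, j ∈ S i) (x : Fin m → Fin 4 → D3)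
    (y : Fin k → Fin 4 → D3) :
    RSP' S x y ↔ Linked WP' S x y ∧ ¬((∀ i, x i 2 = 0) ∧ ∀ j, y j 2 = 0) := by
  constructor
  · rintro ⟨⟨-, -, hne⟩, h⟩
    refine ⟨⟨fun i => ?_, fun i j hj => ?_⟩, hne⟩
    · obtain ⟨hB, h3, h02, -⟩ := h i
      exact (exists_WP'_iff (x i)).2 ⟨hB, h3, h02⟩
    · obtain ⟨hB, h3, h02, hy⟩ := h i
      exact ⟨hB, (hy j hj).2, h3, h02, (hy j hj).1⟩
  · rintro ⟨⟨hdom, hW⟩, hne⟩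
    have hx (i : Fin m) := (exists_WP'_iff (x i)).1 (hdom i)
    have hy (j : Fin k) : y j 2 = 0 ∨ y j 2 = 1 := by
      obtain ⟨i, hij⟩ := hS j
      exact (hW i j hij).2.1.2.1
    exact ⟨⟨fun i => (hx i).1.2.1, hy, hne⟩, fun i => ⟨(hx i).1, (hx i).2.1, (hx i).2.2,
      fun j hj => ⟨(hW i j hj).2.2.2.2, (hW i j hj).2.1⟩⟩⟩

theorem RSP'_gMap (hS : ∀ j, ∃ i, j ∈ S i) {x : Fin m → D3} {y : Fin k → D3} (h : RSP S x y) :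
    RSP' S (fun i => gMap (x i)) (fun j => gMap (y j)) := by
  obtain ⟨hlink, hne⟩ := (RSP_iff_linked x y).1 h
  have hzero : ((∀ i, gMap (x i) 2 = 0) ∧ ∀ j, gMap (y j) 2 = 0) ↔
      (∀ i, x i = 0) ∧ ∀ j, y j = 0 :=
    hlink.forall_eq_zero_congr (p := fun a => gMap a 2) (q := id) hS
      (fun _ _ hW => gMap_apply_two_eq_self hW.1)
      (fun _ _ hW ha => gMap_apply_two_eq_self (hW.2 ha))
  exact (RSP'_iff_linked hS _ _).2 ⟨hlink.map fun _ _ => WP'_gMap, mt hzero.1 hne⟩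

theorem RSP_hMap (hS : ∀ j, ∃ i, j ∈ S i) {x : Fin m → Fin 4 → D3} {y : Fin k → Fin 4 → D3}
    (h : RSP' S x y) : RSP S (fun i => hMap (x i)) (fun j => hMap (y j)) := by
  obtain ⟨hlink, hne⟩ := (RSP'_iff_linked hS x y).1 h
  have hzero : ((∀ i, hMap (x i) = 0) ∧ ∀ j, hMap (y j) = 0) ↔
      (∀ i, x i 2 = 0) ∧ ∀ j, y j 2 = 0 :=
    hlink.forall_eq_zero_congr (q := fun u => u 2) hS (fun _ _ => WP'.hMap_fst_eq)
      (fun _ _ => WP'.hMap_snd_eq)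
  exact (RSP_iff_linked _ _).2 ⟨hlink.map fun _ _ => WP_hMap, mt hzero.1 hne⟩

end Covering

theorem isHomForward_gMap : IsHomForward gMap :=
  ⟨fun _ _ => C3P'_gMap, fun _ _ => WP'_gMap, fun _ _ _ _ _ hS _ _ => RSP'_gMap hS⟩

theorem isHomBackward_hMap : IsHomBackward hMap :=
  ⟨fun _ _ => C3P_hMap, fun _ _ => WP_hMap, fun _ _ _ _ _ hS _ _ => RSP_hMap hS⟩

theorem stmt4 :
    IsHomForward gMap ∧ IsHomBackward hMap ∧
    (∃ (g : D3 → Fin 4 → D3) (h : (Fin 4 → D3) → D3), IsHomForward g ∧ IsHomBackward h) :=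
  ⟨isHomForward_gMap, isHomBackward_hMap, gMap, hMap, isHomForward_gMap, isHomBackward_hMap⟩
end
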